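/- Let C be a group system, t ∈ ℤ, and k ≥ 0. For j ≥ 0 define F^j(Δ_k^t) = {β^{t+j}(a) : a ∈ C, β^t(a) ∈ Δ_k^t}. Then F^j(Δ_k^t) = X_{j−1}^{t+j}·(X_j^{t+j} ∩ Y_{k−j}^{t+j}) for 0 ≤ j ≤ k, and F^j(Δ_k^t) = X_{j−1}^{t+j} for j > k. -/

import Mathlib

open scoped Pointwise

namespace GroupSystemPaper

variable {A : ℤ → Type*} [∀ t, Group (A t)]

/-- `C^{t+}` : codewords of the group system `C` that are the identity before time `t`. -/
def Cplus (C : Subgroup (∀ t, A t)) (t : ℤ) : Subgroup C where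
  carrier := {a | ∀ n < t, (a : ∀ s, A s) n = 1}
  one_mem' := by intro n hn; simp
  mul_mem' := by intro a b ha hb n hn; simp [ha n hn, hb n hn]
  inv_mem' := by intro a ha n hn; simp [ha n hn]

/-- `C^{t−}` : codewords of the group system `C` that are the identity from time `t` on. -/
def Cminus (C : Subgroup (∀ t, A t)) (t : ℤ) : Subgroup C where
  carrier := {a | ∀ n, t ≤ n → (a : ∀ s, A s) n = 1}
  one_mem' := by intro n hn; simp
  mul_mem' := by intro a b ha hb n hn; simp [ha n hn, hb n hn]
  inv_mem' := by intro a ha n hn; simp [ha n hn]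

/-- `C^{[t₁,t₂]}` : codewords supported on the interval `[t₁, t₂]`. -/
def Cint (C : Subgroup (∀ t, A t)) (t₁ t₂ : ℤ) : Subgroup C :=
  Cplus C t₁ ⊓ Cminus C (t₂ + 1)

instance Cplus_normal (C : Subgroup (∀ t, A t)) (t : ℤ) : (Cplus C t).Normal := by
  constructor
  intro x hx g n hn
  have h1 : (x : ∀ s, A s) n = 1 := hx n hn
  simp [h1]

instance Cminus_normal (C : Subgroup (∀ t, A t)) (t : ℤ) : (Cminus C t).Normal := by
  constructor
  intro x hx g n hn
  have h1 : (x : ∀ s, A s) n = 1 := hx n hn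
  simp [h1]

instance Cint_normal (C : Subgroup (∀ t, A t)) (t₁ t₂ : ℤ) : (Cint C t₁ t₂).Normal := by
  constructor
  intro x hx g
  rcases Subgroup.mem_inf.mp hx with ⟨h1, h2⟩
  exact Subgroup.mem_inf.mpr
    ⟨(Cplus_normal C t₁).conj_mem _ h1 g, (Cminus_normal C (t₂ + 1)).conj_mem _ h2 g⟩

/-- The normal subgroup `C^{t−}C^{t+}` of `C`. -/
def stateN (C : Subgroup (∀ t, A t)) (t : ℤ) : Subgroup C :=
  Cminus C t ⊔ Cplus C t

instance stateN_normal (C : Subgroup (∀ t, A t)) (t : ℤ) : (stateN C t).Normal :=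
  Subgroup.sup_normal _ _

/-- The canonical state space `Σ^t = C/(C^{t−}C^{t+})`. -/
abbrev State (C : Subgroup (∀ t, A t)) (t : ℤ) : Type _ :=
  ↥C ⧸ stateN C t

/-- The state projection `σ^t : C → Σ^t`. -/
def sigma (C : Subgroup (∀ t, A t)) (t : ℤ) : ↥C →* State C t :=
  QuotientGroup.mk' (stateN C t)

/-- The evaluation homomorphism `χ^t : C → A^t`. -/
def evalHom (C : Subgroup (∀ t, A t)) (t : ℤ) : ↥C →* A t :=
  (Pi.evalMonoidHom A t).comp C.subtype

/-- The branch homomorphism `β^t : C → Σ^t × A^t × Σ^{t+1}`. -/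
def beta (C : Subgroup (∀ t, A t)) (t : ℤ) :
    ↥C →* State C t × A t × State C (t + 1) :=
  (sigma C t).prod ((evalHom C t).prod (sigma C (t + 1)))

/-- The branch group `B^t = β^t(C)`. -/
def Branch (C : Subgroup (∀ t, A t)) (t : ℤ) :
    Subgroup (State C t × A t × State C (t + 1)) :=
  (beta C t).range

/-- `β^t` with codomain restricted to the branch group `B^t`. -/
def betaRes (C : Subgroup (∀ t, A t)) (t : ℤ) : ↥C →* ↥(Branch C t) :=
  (beta C t).rangeRestrict

/-- `X_j^t = β^t(C^{(t−j)+})` as a subgroup of the branch group `B^t`. -/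
def X (C : Subgroup (∀ t, A t)) (j t : ℤ) : Subgroup ↥(Branch C t) :=
  (Cplus C (t - j)).map (betaRes C t)

/-- `Y_i^t = β^t(C^{(t+i+1)−})` as a subgroup of the branch group `B^t`. -/
def Y (C : Subgroup (∀ t, A t)) (i t : ℤ) : Subgroup ↥(Branch C t) :=
  (Cminus C (t + i + 1)).map (betaRes C t)

instance X_normal (C : Subgroup (∀ t, A t)) (j t : ℤ) : (X C j t).Normal :=
  (Cplus_normal C (t - j)).map _ (MonoidHom.rangeRestrict_surjective _)

instance Y_normal (C : Subgroup (∀ t, A t)) (i t : ℤ) : (Y C i t).Normal :=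
  (Cminus_normal C (t + i + 1)).map _ (MonoidHom.rangeRestrict_surjective _)

/-- `Δ_k^t = X_0^t ∩ Y_k^t`. -/
def Del (C : Subgroup (∀ t, A t)) (k t : ℤ) : Subgroup ↥(Branch C t) :=
  X C 0 t ⊓ Y C k t

/-- `D_k^t = {a ∈ C : β^t(a) ∈ Δ_k^t}`. -/
def D (C : Subgroup (∀ t, A t)) (k t : ℤ) : Subgroup ↥C :=
  (Del C k t).comap (betaRes C t)

/-- Following-branch operator: for `S ⊆ B^{t₁}`,
`FSet C t₁ t₂ S = {β^{t₂}(a) : a ∈ C, β^{t₁}(a) ∈ S}`. -/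
def FSet (C : Subgroup (∀ t, A t)) (t₁ t₂ : ℤ) (S : Set ↥(Branch C t₁)) :
    Set ↥(Branch C t₂) :=
  {x | ∃ a : ↥C, betaRes C t₁ a ∈ S ∧ betaRes C t₂ a = x}

/-- `π^{[t,t+k]} : C → B^t × ⋯ × B^{t+k}`, `a ↦ (β^t(a), …, β^{t+k}(a))`. -/
def piSeg (C : Subgroup (∀ t, A t)) (t : ℤ) (k : ℕ) :
    ↥C →* ∀ j : Fin (k + 1), ↥(Branch C (t + ((j : ℕ) : ℤ))) where
  toFun a := fun j => betaRes C (t + ((j : ℕ) : ℤ)) a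
  map_one' := by funext j; simp
  map_mul' a b := by funext j; simp

/-- `π^{[t,t+k]}(D_m^t)`. -/
def Pseg (C : Subgroup (∀ t, A t)) (t : ℤ) (k : ℕ) (m : ℤ) :
    Subgroup (∀ j : Fin (k + 1), ↥(Branch C (t + ((j : ℕ) : ℤ)))) :=
  (D C m t).map (piSeg C t k)

/-- `β^{t+j}(D_m^t)` : the image of `D_m^t` in the branch group at time `t + j`. -/
def Qb (C : Subgroup (∀ t, A t)) (t m j : ℤ) : Subgroup ↥(Branch C (t + j)) :=
  (D C m t).map (betaRes C (t + j))

/-- The normal subgroup `C^{[t,t+k−1]}C^{[t+1,t+k]}` of `C` (denominator of the granule). -/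
def granN (C : Subgroup (∀ t, A t)) (t : ℤ) (k : ℕ) : Subgroup ↥C :=
  Cint C t (t + k - 1) ⊔ Cint C (t + 1) (t + k)

instance granN_normal (C : Subgroup (∀ t, A t)) (t : ℤ) (k : ℕ) : (granN C t k).Normal :=
  Subgroup.sup_normal _ _

lemma mem_D_of_mem_Cint (C : Subgroup (∀ t, A t)) (t : ℤ) (k : ℕ) {a : ↥C}
    (ha : a ∈ Cint C t (t + k)) : a ∈ D C (k : ℤ) t := by
  rcases Subgroup.mem_inf.mp ha with ⟨h1, h2⟩
  refine Subgroup.mem_comap.mpr (Subgroup.mem_inf.mpr ⟨?_, ?_⟩)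
  · exact Subgroup.mem_map.mpr ⟨a, by simpa using h1, rfl⟩
  · exact Subgroup.mem_map.mpr ⟨a, h2, rfl⟩

/-- `ℓ`-controllability of the group system `C`. -/
def Controllable (C : Subgroup (∀ t, A t)) (ℓ : ℕ) : Prop :=
  ∀ a b : ↥C, ∀ t : ℤ, ∃ c : ↥C,
    (∀ n < t, (c : ∀ s, A s) n = (a : ∀ s, A s) n) ∧
    (∀ n, t + (ℓ : ℤ) ≤ n → (c : ∀ s, A s) n = (b : ∀ s, A s) n)


lemma Cplus_anti (C : Subgroup (∀ t, A t)) {s t : ℤ} (h : s ≤ t) : Cplus C t ≤ Cplus C s :=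
  fun _ ha n hn => ha n (lt_of_lt_of_le hn h)

lemma Cminus_mono (C : Subgroup (∀ t, A t)) {s t : ℤ} (h : s ≤ t) : Cminus C s ≤ Cminus C t :=
  fun _ ha n hn => ha n (le_trans h hn)

lemma betaRes_eq_one_iff (C : Subgroup (∀ t, A t)) (t : ℤ) (a : ↥C) :
    betaRes C t a = 1 ↔
      sigma C t a = 1 ∧ (a : ∀ s, A s) t = 1 ∧ sigma C (t + 1) a = 1 := by
  rw [Subtype.ext_iff]
  change (sigma C t a, (a : ∀ s, A s) t, sigma C (t + 1) a) = 1 ↔ _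
  simp [Prod.ext_iff]

lemma sigma_eq_one_iff (C : Subgroup (∀ t, A t)) (t : ℤ) (a : ↥C) :
    sigma C t a = 1 ↔ a ∈ Cminus C t ⊔ Cplus C t :=
  QuotientGroup.eq_one_iff a

lemma betaRes_Cminus (C : Subgroup (∀ t, A t)) {s t : ℤ} (h : s ≤ t) {a : ↥C}
    (ha : a ∈ Cminus C s) : betaRes C t a = 1 := by
  rw [betaRes_eq_one_iff, sigma_eq_one_iff, sigma_eq_one_iff]
  exact ⟨Subgroup.mem_sup_left (Cminus_mono C h ha), ha t h,
    Subgroup.mem_sup_left (Cminus_mono C (by omega) ha)⟩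

lemma betaRes_Cplus (C : Subgroup (∀ t, A t)) {s t : ℤ} (h : t < s) {a : ↥C}
    (ha : a ∈ Cplus C s) : betaRes C t a = 1 := by
  rw [betaRes_eq_one_iff, sigma_eq_one_iff, sigma_eq_one_iff]
  exact ⟨Subgroup.mem_sup_right (Cplus_anti C h.le ha), ha t h,
    Subgroup.mem_sup_right (Cplus_anti C (by omega) ha)⟩

/-- The kernel of the branch map is `C^{t-} C^{(t+1)+}`. -/
lemma betaRes_ker (C : Subgroup (∀ t, A t)) (t : ℤ) {a : ↥C} (h : betaRes C t a = 1) :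
    ∃ m ∈ Cminus C t, ∃ q ∈ Cplus C (t + 1), m * q = a := by
  rw [betaRes_eq_one_iff, sigma_eq_one_iff, Subgroup.mem_sup_of_normal_left] at h
  obtain ⟨⟨m, hm, q, hq, rfl⟩, h1, -⟩ := h
  refine ⟨m, hm, q, fun n hn => ?_, rfl⟩
  rcases lt_or_eq_of_le (Int.lt_add_one_iff.mp hn) with h | rfl
  · exact hq n h
  · have := hm n le_rfl
    simpa [this] using h1

lemma mem_XY (C : Subgroup (∀ t, A t)) (i j s : ℤ) (hi : 0 ≤ i) (hj : 0 ≤ j)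
    (x : ↥(Branch C s)) :
    x ∈ X C j s ⊓ Y C i s ↔
      ∃ r ∈ Cplus C (s - j), r ∈ Cminus C (s + i + 1) ∧ betaRes C s r = x := by
  constructor
  · rintro ⟨⟨p, hp, rfl⟩, ⟨q, hq, hqp⟩⟩
    obtain ⟨m, hm, u, hu, hmu⟩ := betaRes_ker C s (a := q⁻¹ * p) (by simp [hqp])
    have e : q * m = p * u⁻¹ := by
      rw [eq_mul_inv_iff_mul_eq, mul_assoc, hmu, mul_inv_cancel_left]
    refine ⟨q * m, ?_, ?_, ?_⟩
    · rw [e]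
      exact mul_mem hp (inv_mem (Cplus_anti C (by omega) hu))
    · exact mul_mem hq (Cminus_mono C (by omega) hm)
    · rw [map_mul, betaRes_Cminus C le_rfl hm, mul_one, hqp]
  · rintro ⟨r, h1, h2, rfl⟩
    exact ⟨⟨r, h1, rfl⟩, ⟨r, h2, rfl⟩⟩

lemma mem_FSet_Del (C : Subgroup (∀ t, A t)) (t : ℤ) (k j : ℕ)
    (x : ↥(Branch C (t + (j : ℤ)))) :
    x ∈ FSet C t (t + (j : ℤ)) (Del C (k : ℤ) t : Set ↥(Branch C t)) ↔
      ∃ q ∈ Cplus C (t + 1), ∃ r ∈ Cplus C t, r ∈ Cminus C (t + k + 1) ∧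
        betaRes C (t + (j : ℤ)) (q * r) = x := by
  constructor
  · rintro ⟨a, ha, rfl⟩
    obtain ⟨r, h1, h2, h3⟩ := (mem_XY C _ _ _ (by omega) le_rfl _).mp ha
    obtain ⟨m, hm, q, hq, e⟩ := betaRes_ker C t (a := a * r⁻¹) (by simp [h3])
    refine ⟨q, hq, r, by simpa using h1, h2, ?_⟩
    have e2 : a = m * (q * r) := by rw [← mul_assoc, e]; simp
    rw [e2, map_mul _ m, betaRes_Cminus C (by omega) hm, one_mul]
  · rintro ⟨q, hq, r, h1, h2, rfl⟩
    refine ⟨q * r, ?_, rfl⟩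
    refine (mem_XY C _ _ _ (by omega) le_rfl _).mpr ⟨r, by simpa using h1, h2, ?_⟩
    rw [map_mul, betaRes_Cplus C (by omega) hq, one_mul]

/-- With `F^j(Δ_k^t) = {β^{t+j}(a) : a ∈ C, β^t(a) ∈ Δ_k^t}`, we have
`F^j(Δ_k^t) = X_{j−1}^{t+j}·(X_j^{t+j} ∩ Y_{k−j}^{t+j})` for `0 ≤ j ≤ k`, and
`F^j(Δ_k^t) = X_{j−1}^{t+j}` for `j > k`. -/
theorem statement11 (C : Subgroup (∀ t, A t)) (t : ℤ) (k : ℕ) :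
    (∀ j : ℕ, j ≤ k →
      FSet C t (t + (j : ℤ)) (Del C (k : ℤ) t : Set ↥(Branch C t)) =
        (X C ((j : ℤ) - 1) (t + (j : ℤ)) : Set ↥(Branch C (t + (j : ℤ)))) *
          ((X C (j : ℤ) (t + (j : ℤ)) ⊓ Y C ((k : ℤ) - (j : ℤ)) (t + (j : ℤ)) :
              Subgroup ↥(Branch C (t + (j : ℤ)))) : Set ↥(Branch C (t + (j : ℤ))))) ∧
    (∀ j : ℕ, k < j →
      FSet C t (t + (j : ℤ)) (Del C (k : ℤ) t : Set ↥(Branch C t)) =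
        (X C ((j : ℤ) - 1) (t + (j : ℤ)) : Set ↥(Branch C (t + (j : ℤ))))) := by
  constructor
  · intro j hj
    ext x
    rw [mem_FSet_Del, Set.mem_mul]
    have e1 : t + (j : ℤ) - ((j : ℤ) - 1) = t + 1 := by ring
    have e2 : t + (j : ℤ) - (j : ℤ) = t := by ring
    have e3 : t + (j : ℤ) + ((k : ℤ) - (j : ℤ)) + 1 = t + k + 1 := by ring
    constructor
    · rintro ⟨q, hq, r, h1, h2, rfl⟩
      refine ⟨betaRes C _ q, ⟨q, by rw [e1]; exact hq, rfl⟩, betaRes C _ r,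
        (mem_XY C _ _ _ (by omega) (by omega) _).mpr
          ⟨r, by rw [e2]; exact h1, by rw [e3]; exact h2, rfl⟩, (map_mul _ _ _).symm⟩
    · rintro ⟨y, ⟨q, hq, rfl⟩, z, hz, rfl⟩
      obtain ⟨r, h1, h2, rfl⟩ := (mem_XY C _ _ _ (by omega) (by omega) _).mp hz
      rw [e1] at hq
      rw [e2] at h1
      rw [e3] at h2
      exact ⟨q, hq, r, h1, h2, map_mul _ _ _⟩
  · intro j hj
    ext x
    rw [mem_FSet_Del]
    have e1 : t + (j : ℤ) - ((j : ℤ) - 1) = t + 1 := by ring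
    constructor
    · rintro ⟨q, hq, r, h1, h2, rfl⟩
      refine ⟨q, by rw [e1]; exact hq, ?_⟩
      rw [map_mul, betaRes_Cminus C (by omega) h2, mul_one]
    · rintro ⟨q, hq, rfl⟩
      rw [e1] at hq
      exact ⟨q, hq, 1, one_mem _, one_mem _, by rw [mul_one]⟩

end GroupSystemPaper
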